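/- Let r ≤ n and let A be an r×n integer matrix such that A_{ii} < 0 for 1 ≤ i ≤ r, A_{ij} ≥ 0 for all i ≠ j, and A·a = 0 for some vector a of n positive integers. Suppose that the determinant of the left r×r block of A is zero, while Δ_I ≠ 0 for every proper subset I ⊊ {1,…,r} (Δ_I being the principal minor of the left r×r block on rows and columns I). Then A_{ij} = 0 for all i with 1 ≤ i ≤ r and all j with r < j ≤ n; that is, A = [T | 0] where T is the left r×r block. -/

import Mathlib

/-!
Write `A = [T | N]` and split `a = (b, c)` accordingly, so that `T b = -N c ≤ 0`. The key claim,
`mulVec_eq_zero_of_nonpos`, is `T b = 0`; then `N c = 0` with `N ≥ 0` and `c > 0` forces `N = 0`.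

For the claim, take `v ≠ 0` in the kernel of `T` with some positive entry and let `k` maximise
`v k / b k`. The vector `w = v k • b - b k • v` is nonnegative, vanishes at `k`, and satisfies
`T w = v k • T b ≤ 0`. On a row `i` of the zero set `Z` of `w`, the diagonal entry of `T` does not
contribute to `(T w) i`, which is therefore a sum of nonnegative terms; hence `(T b) i = 0`, and
`T i j = 0` for `j ∉ Z`. So `b` restricted to `Z` is a kernel vector of the principal block of `T`
on `Z`, and `Δ_Z = 0`. Since proper principal minors are nonzero, `Z` is everything.
-/

/-- `Δ_I`: the principal minor of `B` on the rows and columns in `I`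
(with `Δ_∅ = 1`, the determinant of the empty matrix). -/
def pminor {r : ℕ} (B : Matrix (Fin r) (Fin r) ℤ) (I : Finset (Fin r)) : ℤ :=
  (B.submatrix (fun i : {x : Fin r // x ∈ I} => (i : Fin r))
    (fun j : {x : Fin r // x ∈ I} => (j : Fin r))).det

/-- A singular integer matrix with nonnegative off-diagonal entries and nonvanishing proper
principal minors kills every positive vector whose image is nonpositive. -/
theorem mulVec_eq_zero_of_nonpos {r : ℕ} (T : Matrix (Fin r) (Fin r) ℤ)
    (hoff : ∀ i j, i ≠ j → 0 ≤ T i j) (b : Fin r → ℤ) (hb : ∀ i, 0 < b i)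
    (hTb : ∀ i, T.mulVec b i ≤ 0) (hdet : T.det = 0)
    (hprop : ∀ I : Finset (Fin r), I ⊂ Finset.univ → pminor T I ≠ 0) :
    ∀ i, T.mulVec b i = 0 := by
  obtain ⟨v, ⟨i₀, hi₀⟩, hTv⟩ : ∃ v : Fin r → ℤ, (∃ i, 0 < v i) ∧ T.mulVec v = 0 := by
    obtain ⟨v, hv, hTv⟩ := Matrix.exists_mulVec_eq_zero_iff.mpr hdet
    obtain ⟨i, hi⟩ := Function.ne_iff.mp hv
    rcases lt_or_gt_of_ne hi with h | h
    · exact ⟨-v, ⟨i, by simpa using h⟩, by simp [Matrix.mulVec_neg, hTv]⟩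
    · exact ⟨v, ⟨i, h⟩, hTv⟩
  obtain ⟨k, -, hk⟩ := Finset.exists_max_image Finset.univ
    (fun i => (v i : ℚ) / (b i : ℚ)) ⟨i₀, Finset.mem_univ _⟩
  have hbQ : ∀ i, (0 : ℚ) < b i := fun i => by exact_mod_cast hb i
  have hmax : ∀ j, v j * b k ≤ v k * b j := fun j => by
    have := hk j (Finset.mem_univ _)
    rw [div_le_div_iff₀ (hbQ j) (hbQ k)] at this
    exact_mod_cast this
  have hvk : 0 < v k := by
    have h1 := mul_pos hi₀ (hb k)
    exact pos_of_mul_pos_left (h1.trans_le (hmax i₀)) (hb i₀).le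
  obtain ⟨w, hw⟩ : ∃ w : Fin r → ℤ, w = v k • b - b k • v := ⟨_, rfl⟩
  have hw0 : ∀ j, 0 ≤ w j := fun j => by
    have := hmax j
    simp only [hw, Pi.sub_apply, Pi.smul_apply, smul_eq_mul]
    linarith
  have hwk : w k = 0 := by
    simp only [hw, Pi.sub_apply, Pi.smul_apply, smul_eq_mul]
    ring
  have hTw : ∀ i, ∑ j, T i j * w j = v k * T.mulVec b i := fun i => by
    have : T.mulVec w = v k • T.mulVec b := by
      rw [hw, Matrix.mulVec_sub, Matrix.mulVec_smul, Matrix.mulVec_smul, hTv]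
      simp
    exact congrFun this i
  have hnn : ∀ i, w i = 0 → ∀ j, 0 ≤ T i j * w j := fun i hi j => by
    by_cases hij : i = j
    · rw [← hij, hi, mul_zero]
    · exact mul_nonneg (hoff i j hij) (hw0 j)
  have hrow : ∀ i, w i = 0 → T.mulVec b i = 0 := fun i hi => by
    have h1 : 0 ≤ v k * T.mulVec b i := hTw i ▸ Finset.sum_nonneg fun j _ => hnn i hi j
    exact le_antisymm (hTb i) (nonneg_of_mul_nonneg_right h1 hvk)
  have hblock : ∀ i, w i = 0 → ∀ j, w j ≠ 0 → T i j = 0 := fun i hi j hj => by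
    have h1 := hTw i
    rw [hrow i hi, mul_zero, Finset.sum_eq_zero_iff_of_nonneg fun j _ => hnn i hi j] at h1
    exact (mul_eq_zero.mp (h1 j (Finset.mem_univ _))).resolve_right hj
  by_cases hZ : ∀ i, w i = 0
  · exact fun i => hrow i (hZ i)
  exfalso
  push Not at hZ
  obtain ⟨l, hl⟩ := hZ
  refine hprop (Finset.univ.filter fun i => w i = 0) ?_ ?_
  · exact Finset.filter_ssubset.mpr ⟨l, Finset.mem_univ _, hl⟩
  · rw [pminor, ← Matrix.exists_mulVec_eq_zero_iff]
    refine ⟨fun i => b i, fun h => ?_, ?_⟩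
    · exact (hb k).ne' (congrFun h ⟨k, by simpa using hwk⟩)
    · ext ⟨i, hi⟩
      have hi' : w i = 0 := by simpa using hi
      have h1 := hrow i hi'
      simp only [Matrix.mulVec, dotProduct, Matrix.submatrix_apply, Pi.zero_apply] at h1 ⊢
      rw [Finset.sum_coe_sort (Finset.univ.filter fun i => w i = 0) (fun j => T i j * b j)]
      refine Eq.trans (Finset.sum_subset (Finset.subset_univ _) fun j _ hj => ?_) h1
      rw [hblock i hi' j (by simpa using hj), zero_mul]

/-- let `A` be an `r × n` integer matrix (`r ≤ n`) with negative diagonal,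
nonnegative off-diagonal entries and `A·a = 0` for a vector `a` of positive integers.
If the determinant of the left `r × r` block `T` of `A` vanishes while all proper
principal minors of `T` are nonzero, then all the columns of `A` beyond the `r`-th vanish,
i.e. `A = [T | 0]`. -/
theorem left_block_of_vanishing_det {r n : ℕ} (hrn : r ≤ n)
    (A : Matrix (Fin r) (Fin n) ℤ)
    (hdiag : ∀ i : Fin r, A i (Fin.castLE hrn i) < 0)
    (hoff : ∀ (i : Fin r) (j : Fin n), Fin.castLE hrn i ≠ j → 0 ≤ A i j)
    (a : Fin n → ℤ) (hapos : ∀ i, 0 < a i) (hAa : A.mulVec a = 0)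
    (hdet : (Matrix.of fun i j : Fin r => A i (Fin.castLE hrn j)).det = 0)
    (hprop : ∀ I : Finset (Fin r), I ⊂ Finset.univ →
      pminor (Matrix.of fun i j : Fin r => A i (Fin.castLE hrn j)) I ≠ 0) :
    ∀ (i : Fin r) (j : Fin n), r ≤ (j : ℕ) → A i j = 0 := by
  obtain ⟨m, rfl⟩ := Nat.exists_eq_add_of_le hrn
  have hsplit : ∀ i, ∑ j : Fin r, A i (Fin.castLE hrn j) * a (Fin.castLE hrn j)
      + ∑ j : Fin m, A i (Fin.natAdd r j) * a (Fin.natAdd r j) = 0 := fun i => by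
    have h := congrFun hAa i
    simp only [Matrix.mulVec, dotProduct, Fin.sum_univ_add, Pi.zero_apply] at h
    exact h
  have hN : ∀ i (j : Fin m), 0 ≤ A i (Fin.natAdd r j) * a (Fin.natAdd r j) := fun i j => by
    refine mul_nonneg (hoff i _ fun h => ?_) (hapos _).le
    have h1 := congrArg Fin.val h
    simp only [Fin.val_castLE, Fin.val_natAdd] at h1
    omega
  have key := mulVec_eq_zero_of_nonpos (Matrix.of fun i j : Fin r => A i (Fin.castLE hrn j))
    (fun i j hij => hoff i _ fun h => hij (Fin.castLE_injective hrn h))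
    (fun j => a (Fin.castLE hrn j)) (fun j => hapos _)
    (fun i => by
      have h1 := hsplit i
      have h2 := Finset.sum_nonneg fun j (_ : j ∈ Finset.univ) => hN i j
      simp only [Matrix.mulVec, dotProduct, Matrix.of_apply]
      linarith) hdet hprop
  intro i j hj
  have h1 := hsplit i
  have h2 := key i
  simp only [Matrix.mulVec, dotProduct, Matrix.of_apply] at h2
  rw [h2, zero_add, Finset.sum_eq_zero_iff_of_nonneg fun j _ => hN i j] at h1
  obtain ⟨j', rfl⟩ : ∃ j' : Fin m, Fin.natAdd r j' = j :=
    ⟨⟨j - r, by omega⟩, Fin.ext (by simp only [Fin.val_natAdd]; omega)⟩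
  exact (mul_eq_zero.mp (h1 j' (Finset.mem_univ _))).resolve_right (hapos _).ne'
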